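/- arXiv:math/0406284 — 5 statements merged into one kernel-verified Lean document; each statement's English description precedes it below -/
import Mathlib

section
/- For every positive integer s, the number of lattice points in the dilation sP of the cuboctahedron P, namely the cardinality of {x ∈ ℤ³ : 0 ≤ x_i ≤ s for i = 1,2,3, and 2(|x₁−sε₁|+|x₂−sε₂|+|x₃−sε₃|) ≥ s for every ε ∈ {0,1}³}, equals (5/6)s³ + 2s² + (5/3)s + 1 if s is even, and equals (5/6)s³ + (3/2)s² − (5/6)s − 3/2 if s is odd. -/
open Finset

/-!
The lattice points of the cube `[0, s]³` that fail the inequality at a vertex `sε` form a corner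
simplex: after reflecting the coordinates `i` with `ε i = true`, they are the triples of natural
numbers with sum less than `m = ⌈s / 2⌉`, so there are `(m + 2).choose 3` of them
(`card_corner`). The eight corners are pairwise disjoint, because two distinct vertices of the cube
are at `ℓ¹`-distance at least `s` (`corner_disjoint`). Hence the count is
`(s + 1)³ - 8 * (m + 2).choose 3` (`card_add_corners`), and both formulas follow from the parity
of `s`.
-/

/-- The lattice points of the cube `[0, s]³`. -/
noncomputable def cubePoints (s : ℕ) : Finset (Fin 3 → ℤ) := Fintype.piFinset fun _ => Icc 0 (s : ℤ)

/-- The lattice points of the cube `[0, s]³` cut off at the vertex `sε`. -/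
noncomputable def corner (s : ℕ) (ε : Fin 3 → Bool) : Finset (Fin 3 → ℤ) :=
  (cubePoints s).filter fun x => 2 * ∑ i, |x i - (if ε i then (s : ℤ) else 0)| < s

lemma mem_cubePoints {s : ℕ} {x : Fin 3 → ℤ} :
    x ∈ cubePoints s ↔ ∀ i, 0 ≤ x i ∧ x i ≤ (s : ℤ) := by
  simp [cubePoints, Fintype.mem_piFinset]

lemma card_cubePoints (s : ℕ) : #(cubePoints s) = (s + 1) ^ 3 := by
  simp [cubePoints, Fintype.card_piFinset]

lemma corner_disjoint (s : ℕ) {ε δ : Fin 3 → Bool} (h : ε ≠ δ) :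
    Disjoint (corner s ε) (corner s δ) := by
  rw [Finset.disjoint_left]
  intro x hx hy
  obtain ⟨i, hi⟩ := Function.ne_iff.mp h
  simp only [corner, mem_filter] at hx hy
  have key : ∀ η : Fin 3 → Bool, |x i - (if η i then (s : ℤ) else 0)| ≤
      ∑ i, |x i - (if η i then (s : ℤ) else 0)| := fun η =>
    Finset.single_le_sum (f := fun i => |x i - (if η i then (s : ℤ) else 0)|)
      (fun _ _ => abs_nonneg _) (mem_univ i)
  have h1 := key ε
  have h2 := key δ
  have h3 := hx.2
  have h4 := hy.2
  cases hε : ε i <;> cases hδ : δ i <;> simp_all <;> grind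

/-- Stars and bars: a triple of natural numbers with sum `n` is a multiset of size `n` on three
letters. -/
lemma card_piAntidiag_three (n : ℕ) :
    #(piAntidiag (univ : Finset (Fin 3)) n) = (n + 2).choose 2 := by
  rw [← map_sym_eq_piAntidiag, card_map, sym_univ, card_univ, Sym.card_sym_eq_choose,
    Fintype.card_fin, show 3 + n - 1 = n + 2 by omega, Nat.choose_symm_add]

lemma card_corner (s : ℕ) (ε : Fin 3 → Bool) :
    #(corner s ε) = ((s + 1) / 2 + 2).choose 3 := by
  -- Slice the corner by the distance to its vertex.
  have hmaps : Set.MapsTo (fun x : Fin 3 → ℤ => ∑ i, (x i - (if ε i then (s : ℤ) else 0)).natAbs)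
      (corner s ε : Set (Fin 3 → ℤ)) (range ((s + 1) / 2) : Set ℕ) := by
    intro x hx
    simp only [corner, coe_filter, Set.mem_ofPred_eq, Fin.sum_univ_three, Int.abs_eq_natAbs] at hx
    simp only [coe_range, Set.mem_Iio, Fin.sum_univ_three]
    omega
  have hslice : ∀ n ∈ range ((s + 1) / 2),
      #{x ∈ corner s ε | ∑ i, (x i - (if ε i then (s : ℤ) else 0)).natAbs = n} =
        (n + 2).choose 2 := by
    intro n hn
    rw [mem_range] at hn
    rw [← card_piAntidiag_three]
    refine Finset.card_nbij' (fun x i => (x i - (if ε i then (s : ℤ) else 0)).natAbs)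
      (fun y i => if ε i then (s : ℤ) - y i else y i) ?_ ?_ ?_ ?_
    · intro x hx
      simp_all
    · intro y hy
      simp only [mem_coe, mem_piAntidiag] at hy
      have hle : ∀ i, y i ≤ n := fun i => by
        rw [← hy.1]; exact Finset.single_le_sum (fun _ _ => Nat.zero_le _) (mem_univ i)
      have habs : ∀ i, ((if ε i then (s : ℤ) - y i else y i) -
          (if ε i then (s : ℤ) else 0)).natAbs = y i := by
        intro i; split_ifs <;> omega
      have habs' : ∀ i, |(if ε i then (s : ℤ) - y i else y i) -
          (if ε i then (s : ℤ) else 0)| = y i := by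
        intro i; rw [Int.abs_eq_natAbs, habs]
      simp only [corner, coe_filter, Set.mem_ofPred_eq, mem_filter, mem_cubePoints, habs, habs']
      refine ⟨⟨fun i => ?_, ?_⟩, hy.1⟩
      · have := hle i
        split_ifs <;> omega
      · have := hy.1
        rw [← Nat.cast_sum, this]
        omega
    · intro x hx
      simp only [corner, coe_filter, Set.mem_ofPred_eq, mem_filter, mem_cubePoints] at hx
      funext i
      have := hx.1.1 i
      dsimp only
      split_ifs <;> omega
    · intro y hy
      funext i
      dsimp only
      split_ifs <;> omega
  rw [Finset.card_eq_sum_card_fiberwise hmaps, Finset.sum_congr rfl hslice]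
  generalize (s + 1) / 2 = m
  induction m with
  | zero => rfl
  | succ k ih => rw [sum_range_succ, ih, Nat.choose_succ_succ' (k + 2) 2, add_comm]

lemma card_add_corners (s : ℕ) :
    Nat.card {x : Fin 3 → ℤ //
      (∀ i, 0 ≤ x i ∧ x i ≤ (s : ℤ)) ∧
      (∀ ε : Fin 3 → Bool,
        (s : ℤ) ≤ 2 * ∑ i, |x i - (if ε i then (s : ℤ) else 0)|)} +
      8 * ((s + 1) / 2 + 2).choose 3 = (s + 1) ^ 3 := by
  have hbad : #(univ.biUnion (corner s)) = 8 * ((s + 1) / 2 + 2).choose 3 := by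
    rw [card_biUnion fun ε _ δ _ h => corner_disjoint s h]
    simp [card_corner]
  have hsub : univ.biUnion (corner s) ⊆ cubePoints s :=
    biUnion_subset.mpr fun ε _ => filter_subset _ _
  rw [← hbad, ← card_cubePoints, ← card_sdiff_add_card_eq_card hsub]
  congr 1
  refine Nat.subtype_card _ fun x => ?_
  simp only [mem_sdiff, mem_cubePoints, mem_biUnion, mem_univ, true_and, corner, mem_filter,
    not_exists, not_and, not_lt]
  exact ⟨fun h => ⟨h.1, fun ε => h.2 ε h.1⟩, fun h => ⟨h.1, fun ε _ => h.2 ε⟩⟩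

lemma cast_choose_three (m : ℕ) :
    ((m + 2).choose 3 : ℚ) = (m : ℚ) * (m + 1) * (m + 2) / 6 := by
  induction m with
  | zero => simp
  | succ k ih =>
    rw [Nat.choose_succ_succ' (k + 2) 2, Nat.cast_add, ih, Nat.cast_choose_two]
    push_cast
    ring

theorem cuboctahedron_ehrhart (s : ℕ) (hs : 0 < s) :
    (s % 2 = 0 →
      ((Nat.card {x : Fin 3 → ℤ //
          (∀ i, 0 ≤ x i ∧ x i ≤ (s : ℤ)) ∧
          (∀ ε : Fin 3 → Bool,
            (s : ℤ) ≤ 2 * ∑ i, |x i - (if ε i then (s : ℤ) else 0)|)} : ℚ) =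
        5 / 6 * (s : ℚ) ^ 3 + 2 * (s : ℚ) ^ 2 + 5 / 3 * (s : ℚ) + 1)) ∧
    (s % 2 = 1 →
      ((Nat.card {x : Fin 3 → ℤ //
          (∀ i, 0 ≤ x i ∧ x i ≤ (s : ℤ)) ∧
          (∀ ε : Fin 3 → Bool,
            (s : ℤ) ≤ 2 * ∑ i, |x i - (if ε i then (s : ℤ) else 0)|)} : ℚ) =
        5 / 6 * (s : ℚ) ^ 3 + 3 / 2 * (s : ℚ) ^ 2 - 5 / 6 * (s : ℚ) - 3 / 2)) := by
  have h := congrArg (Nat.cast : ℕ → ℚ) (card_add_corners s)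
  rw [Nat.cast_add, Nat.cast_mul, cast_choose_three, Nat.cast_pow, Nat.cast_add s 1] at h
  rw [eq_sub_of_add_eq h]
  refine ⟨fun h0 => ?_, fun h1 => ?_⟩
  · have hm : ((s : ℕ) : ℚ) = 2 * ((s + 1) / 2 : ℕ) := by
      exact_mod_cast (by omega : s = 2 * ((s + 1) / 2))
    generalize (s + 1) / 2 = m at hm ⊢
    rw [hm]
    push_cast
    ring
  · have hm : ((s : ℕ) : ℚ) + 1 = 2 * ((s + 1) / 2 : ℕ) := by
      exact_mod_cast (by omega : s + 1 = 2 * ((s + 1) / 2))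
    generalize (s + 1) / 2 = m at hm ⊢
    rw [eq_sub_of_add_eq hm]
    push_cast
    ring
end

section
/- For every positive integer s, the number of lattice points in the dilation sP of the 24-cell P, namely the cardinality of {x ∈ ℤ⁴ : |x_i| ≤ s for i = 1,…,4, and ε₁x₁+ε₂x₂+ε₃x₃+ε₄x₄ ≤ 2s for every ε ∈ {−1,1}⁴}, equals 8s⁴ + (32/3)s³ + 8s² + (16/3)s + 1. -/
/-!
The sixteen inequalities `∑ εᵢ xᵢ ≤ 2s` together say `∑ |xᵢ| ≤ 2s`, so the points to count are those
of the cube `[-s, s]⁴` with `ℓ¹`-norm at most `2s`. Slicing along one coordinate gives the recursion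
`boxCount (n + 1) s r = ∑_{|a| ≤ s} boxCount n s (r - |a|)` for the number `boxCount n s r` of
points of `[-s, s]ⁿ` with `ℓ¹`-norm at most `r` (`card_eq_boxCount`). As a function of `r` this number is piecewise polynomial
with breakpoints at multiples of `s`; it is computed in dimensions 1 and 2 on `[0, s]` and `[s, 2s]`,
in dimension 3 on `[s, 2s]` only, and in dimension 4 at `r = 2s`. Each step splits the slicing sum at
the breakpoint and sums a polynomial of degree at most three.
-/

open Finset

/-- The number of points of `[-s, s]ⁿ ∩ ℤⁿ` with `ℓ¹`-norm at most `r`, defined by slicing along one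
coordinate; see `card_eq_boxCount`. The radius is an integer, and the count vanishes when it is
negative. -/
noncomputable def boxCount : ℕ → ℕ → ℤ → ℚ
  | 0, _, r => if 0 ≤ r then 1 else 0
  | n + 1, s, r => ∑ a ∈ Icc (-(s : ℤ)) s, boxCount n s (r - |a|)

theorem card_eq_boxCount (n s : ℕ) (r : ℤ) :
    ((((Fintype.piFinset fun _ : Fin n => Icc (-(s : ℤ)) s).filter
      fun x => ∑ i, |x i| ≤ r).card : ℕ) : ℚ) = boxCount n s r := by
  induction n generalizing r with
  | zero =>
    by_cases h : 0 ≤ r <;> simp [boxCount, h]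
  | succ n ih =>
    simp only [boxCount, ← ih]
    rw [← Nat.cast_sum, ← Finset.card_sigma]
    congr 1
    refine Finset.card_bij' (fun x _ => ⟨x 0, Fin.tail x⟩) (fun p _ => Fin.cons p.1 p.2) ?_ ?_ ?_ ?_
    · intro x hx
      simp only [mem_filter, Fintype.mem_piFinset, Fin.sum_univ_succ, mem_sigma] at hx ⊢
      exact ⟨hx.1 0, fun i => hx.1 i.succ, by simp only [Fin.tail]; linarith [hx.2]⟩
    · rintro ⟨a, x⟩ hx
      simp only [mem_filter, Fintype.mem_piFinset, Fin.sum_univ_succ, mem_sigma, Fin.cons_zero,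
        Fin.cons_succ, Fin.forall_fin_succ] at hx ⊢
      exact ⟨⟨hx.1, hx.2.1⟩, by linarith [hx.2.2]⟩
    · intro x _
      simp
    · rintro ⟨a, x⟩ _
      simp

theorem sum_Icc_abs (s : ℕ) (f : ℤ → ℚ) :
    ∑ a ∈ Icc (-(s : ℤ)) s, f |a| = f 0 + 2 * ∑ j ∈ range s, f (j + 1) := by
  induction s with
  | zero => simp
  | succ s ih =>
    have h : Icc (-((s + 1 : ℕ) : ℤ)) ((s + 1 : ℕ) : ℤ) =
        insert (-((s : ℤ) + 1)) (insert ((s : ℤ) + 1) (Icc (-(s : ℤ)) s)) := by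
      ext x
      simp only [mem_Icc, mem_insert]
      omega
    rw [h, sum_insert, sum_insert, ih, sum_range_succ, abs_neg, abs_of_nonneg (by positivity)]
    · ring
    · simp
    · simp only [mem_insert, mem_Icc]
      omega

theorem boxCount_succ (n s : ℕ) (r : ℤ) :
    boxCount (n + 1) s r =
      boxCount n s r + 2 * ∑ j ∈ range s, boxCount n s (r - (j + 1)) := by
  rw [boxCount, sum_Icc_abs s fun a => boxCount n s (r - a), sub_zero]

theorem sum_range_cubic (n : ℕ) (a b c d : ℚ) :
    ∑ j ∈ range n, (a + b * j + c * (j : ℚ) ^ 2 + d * (j : ℚ) ^ 3) =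
      a * n + b * (n * (n - 1) / 2) + c * (n * (n - 1) * (2 * n - 1) / 6) +
        d * (n * (n - 1) / 2) ^ 2 := by
  induction n with
  | zero => simp
  | succ n ih =>
    rw [sum_range_succ, ih]
    push_cast
    ring

/-- Summation of a function that agrees with a cubic polynomial on `range n`. -/
theorem sum_range_of_eq_cubic {n : ℕ} {f : ℕ → ℚ} (a b c d : ℚ)
    (h : ∀ j < n, f j = a + b * j + c * (j : ℚ) ^ 2 + d * (j : ℚ) ^ 3) :
    ∑ j ∈ range n, f j =
      a * n + b * (n * (n - 1) / 2) + c * (n * (n - 1) * (2 * n - 1) / 6) +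
        d * (n * (n - 1) / 2) ^ 2 := by
  rw [← sum_range_cubic]
  exact sum_congr rfl fun j hj => h j (mem_range.1 hj)

theorem boxCount_neg (n s : ℕ) (r : ℤ) (hr : r < 0) : boxCount n s r = 0 := by
  induction n generalizing r with
  | zero => simp [boxCount, hr]
  | succ n ih =>
    rw [boxCount]
    exact sum_eq_zero fun a _ => ih _ (by linarith [abs_nonneg a])

theorem boxCount_zero (s : ℕ) (r : ℤ) (hr : 0 ≤ r) : boxCount 0 s r = 1 := by
  simp [boxCount, hr]

theorem boxCount_one_of_le (s : ℕ) (r : ℤ) (h0 : 0 ≤ r) (hr : r ≤ s) :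
    boxCount 1 s r = 2 * r + 1 := by
  lift r to ℕ using h0
  obtain ⟨k, rfl⟩ := Nat.exists_eq_add_of_le (Nat.cast_le.1 hr)
  rw [boxCount_succ, sum_range_add, boxCount_zero _ _ (by positivity),
    sum_range_of_eq_cubic (n := r) 1 0 0 0, sum_range_of_eq_cubic (n := k) 0 0 0 0]
  · push_cast
    ring
  · intro j _
    rw [boxCount_neg _ _ _ (by push_cast; omega)]
    ring
  · intro j _
    rw [boxCount_zero _ _ (by omega)]
    ring

theorem boxCount_one_of_ge (s : ℕ) (r : ℤ) (hr : s ≤ r) :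
    boxCount 1 s r = 2 * s + 1 := by
  rw [boxCount_succ, boxCount_zero _ _ (by omega), sum_range_of_eq_cubic 1 0 0 0]
  · ring
  · intro j _
    rw [boxCount_zero _ _ (by omega)]
    ring

theorem boxCount_two_of_le (s : ℕ) (r : ℤ) (h0 : 0 ≤ r) (hr : r ≤ s) :
    boxCount 2 s r = 2 * r ^ 2 + 2 * r + 1 := by
  lift r to ℕ using h0
  obtain ⟨k, rfl⟩ := Nat.exists_eq_add_of_le (Nat.cast_le.1 hr)
  rw [boxCount_succ, sum_range_add, boxCount_one_of_le _ _ (by positivity) hr,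
    sum_range_of_eq_cubic (n := r) (2 * r - 1) (-2) 0 0, sum_range_of_eq_cubic (n := k) 0 0 0 0]
  · push_cast
    ring
  · intro j _
    rw [boxCount_neg _ _ _ (by push_cast; omega)]
    ring
  · intro j _
    rw [boxCount_one_of_le _ _ (by omega) (by push_cast; omega)]
    push_cast
    ring

theorem boxCount_two_of_ge (s m : ℕ) (hm : m ≤ s) :
    boxCount 2 s (s + m) = (2 * s + 1) ^ 2 - 2 * (s - m) * (s - m + 1) := by
  obtain ⟨k, rfl⟩ := Nat.exists_eq_add_of_le hm
  rw [boxCount_succ, sum_range_add, boxCount_one_of_ge _ _ (by omega),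
    sum_range_of_eq_cubic (n := m) (2 * (m + k) + 1) 0 0 0,
    sum_range_of_eq_cubic (n := k) (2 * (m + k) - 1) (-2) 0 0]
  · push_cast
    ring
  · intro j _
    rw [boxCount_one_of_le _ _ (by push_cast; omega) (by push_cast; omega)]
    push_cast
    ring
  · intro j _
    rw [boxCount_one_of_ge _ _ (by push_cast; omega)]
    push_cast
    ring

/-- The first term counts the octahedron of radius `s + m`; the second removes its six disjoint caps
where one coordinate exceeds `s` in absolute value. -/
theorem boxCount_three_of_ge (s m : ℕ) (hm : m ≤ s) :
    boxCount 3 s (s + m) =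
      (2 * (s + m) + 1) * (2 * (s + m) ^ 2 + 2 * (s + m) + 3) / 3 -
        6 * (m * (m - 1) * (2 * m - 1) / 3 + m * (m - 1) + m) := by
  obtain ⟨k, rfl⟩ := Nat.exists_eq_add_of_le hm
  -- The slice at height `j + 1` has radius `s + (m - 1 - j)` for `j < m`, and radius `s - 1 - i`
  -- for `j = m + i`; the coefficients are those of the two planar counts expanded in `j` and `i`.
  rw [boxCount_succ, sum_range_add, boxCount_two_of_ge _ _ (by omega),
    sum_range_of_eq_cubic (n := m) ((2 * (m + k) + 1) ^ 2 - 2 * (k + 1) * (k + 2))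
      (-2 * (2 * k + 3)) (-2) 0,
    sum_range_of_eq_cubic (n := k) (2 * (m + k - 1) ^ 2 + 2 * (m + k - 1) + 1)
      (-4 * (m + k - 1) - 2) 2 0]
  · push_cast
    ring
  · intro j _
    rw [boxCount_two_of_le _ _ (by push_cast; omega) (by push_cast; omega)]
    push_cast
    ring
  · intro j hj
    obtain ⟨i, rfl⟩ := Nat.exists_eq_add_of_lt hj
    have h : (((j + i + 1 + k : ℕ) : ℤ) + ((j + i + 1 : ℕ) : ℤ) - ((j : ℤ) + 1)) =
        ((j + i + 1 + k : ℕ) : ℤ) + (i : ℕ) := by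
      push_cast
      ring
    rw [h, boxCount_two_of_ge _ _ (by omega)]
    push_cast
    ring

theorem boxCount_four (s : ℕ) :
    boxCount 4 s (s + s) =
      8 * (s : ℚ) ^ 4 + 32 / 3 * (s : ℚ) ^ 3 + 8 * (s : ℚ) ^ 2 + 16 / 3 * (s : ℚ) + 1 := by
  -- Reversing the order of summation, the slices have radius `s + j` for `j < s`.
  rw [boxCount_succ, boxCount_three_of_ge _ _ le_rfl, ← sum_range_reflect,
    sum_range_of_eq_cubic ((2 * s + 1) * (2 * s ^ 2 + 2 * s + 3) / 3)
      (4 * s ^ 2 + 4 * s + 8 / 3 - 2) (4 * s + 2) (4 / 3 - 4)]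
  · ring
  · intro j hj
    have h : ((s : ℤ) + s - (((s - 1 - j : ℕ) : ℤ) + 1)) = (s : ℤ) + (j : ℕ) := by
      omega
    rw [h, boxCount_three_of_ge _ _ hj.le]
    ring

/-- Maximising `∑ εᵢ xᵢ` over sign vectors gives the `ℓ¹`-norm. -/
theorem forall_sign_sum_le_iff {n : ℕ} (x : Fin n → ℤ) (r : ℤ) :
    (∀ ε : Fin n → ℤ, (∀ i, ε i = 1 ∨ ε i = -1) → ∑ i, ε i * x i ≤ r) ↔ ∑ i, |x i| ≤ r := by
  constructor
  · intro h
    have h' := h (fun i => if 0 ≤ x i then 1 else -1) fun i => by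
      by_cases hi : 0 ≤ x i <;> simp [hi]
    convert h' using 2 with i
    by_cases hi : 0 ≤ x i
    · simp [hi, abs_of_nonneg hi]
    · simp [hi, abs_of_neg (not_le.1 hi)]
  · intro h ε hε
    refine (sum_le_sum fun i _ => ?_).trans h
    rcases hε i with hi | hi
    · simpa [hi] using le_abs_self (x i)
    · simpa [hi] using neg_le_abs (x i)

theorem cell24_ehrhart (s : ℕ) (hs : 0 < s) :
    ((Nat.card {x : Fin 4 → ℤ //
        (∀ i, |x i| ≤ (s : ℤ)) ∧
        (∀ ε : Fin 4 → ℤ, (∀ i, ε i = 1 ∨ ε i = -1) →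
          ∑ i, ε i * x i ≤ 2 * (s : ℤ))} : ℚ) =
      8 * (s : ℚ) ^ 4 + 32 / 3 * (s : ℚ) ^ 3 + 8 * (s : ℚ) ^ 2 + 16 / 3 * (s : ℚ) + 1) := by
  rw [← boxCount_four, ← card_eq_boxCount, Nat.subtype_card]
  intro x
  rw [forall_sign_sum_le_iff, mem_filter, Fintype.mem_piFinset, two_mul]
  simp only [mem_Icc, abs_le]
end

section
/- The equation 12223x₁ + 12224x₂ + 36674x₃ + 61119x₄ + 85569x₅ = 89643481 has no solution in nonnegative integers x₁,…,x₅, while the equation 12223x₁ + 12224x₂ + 36674x₃ + 61119x₄ + 85569x₅ = 89643482 has exactly one solution in nonnegative integers, namely (x₁,…,x₅) = (7334, 0, 0, 0, 0). -/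
/-!
With `M = 12224` the coefficients are `M - 1, M, 3M + 2, 5M - 1, 7M + 1`, so the left-hand side
is `M * P + R`, where `P = x₀ + x₁ + 3x₂ + 5x₃ + 7x₄` and `R = -x₀ + 2x₂ - x₃ + x₄`.
For nonnegative `x` one has `-P ≤ R` and `3R ≤ 2P`. The right-hand side `89643482` is
`7334 * M - 7334`, and no lattice point of the cone `-P ≤ R ≤ 2P/3` lies on the line
`M * P + R = 89643481`, while `(7334, -7334)` is the only one on `M * P + R = 89643482`. The latter
point lies on the face `R = -P`, and `P + R = x₁ + 5x₂ + 4x₃ + 8x₄ = 0` forces all variables but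
`x₀` to vanish.
-/

/-- The reduction to two variables: `(p, r)` is the pair `(P, R)` of the decomposition
`M * P + R` of the left-hand side, with `M = 12224`, together with the identity
`P + R = x₁ + 5x₂ + 4x₃ + 8x₄`. -/
lemma exists_cone_point (a b c d e n : ℕ)
    (h : 12223 * a + 12224 * b + 36674 * c + 61119 * d + 85569 * e = n) :
    ∃ p r : ℤ, 12224 * p + r = n ∧ -p ≤ r ∧ 3 * r ≤ 2 * p ∧
      p + r = b + 5 * c + 4 * d + 8 * e :=
  ⟨a + b + 3 * c + 5 * d + 7 * e, -a + 2 * c - d + e,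
    by omega, by omega, by omega, by omega⟩

theorem cuww1_frobenius :
    (¬ ∃ x : Fin 5 → ℕ,
        12223 * x 0 + 12224 * x 1 + 36674 * x 2 + 61119 * x 3 + 85569 * x 4 = 89643481) ∧
    (∀ x : Fin 5 → ℕ,
        (12223 * x 0 + 12224 * x 1 + 36674 * x 2 + 61119 * x 3 + 85569 * x 4 = 89643482) ↔
          x = ![7334, 0, 0, 0, 0]) := by
  refine ⟨?_, fun x => ⟨fun h => ?_, ?_⟩⟩
  · rintro ⟨x, h⟩
    obtain ⟨p, r, h1, h2, h3, -⟩ := exists_cone_point _ _ _ _ _ _ h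
    push_cast at h1
    omega
  · obtain ⟨p, r, h1, h2, h3, h4⟩ := exists_cone_point _ _ _ _ _ _ h
    push_cast at h1
    have hp : p = 7334 := by clear h h4; omega
    have hr : r = -7334 := by clear h h4; omega
    have e1 : x 1 = 0 := by clear h h1; omega
    have e2 : x 2 = 0 := by clear h h1; omega
    have e3 : x 3 = 0 := by clear h h1; omega
    have e4 : x 4 = 0 := by clear h h1; omega
    have e0 : x 0 = 7334 := by
      rw [e1, e2, e3, e4] at h
      clear h1
      omega
    ext i
    fin_cases i <;> simp [e0, e1, e2, e3, e4]
  · rintro rfl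
    simp
end

section
/- The number of solutions in nonnegative integers (x₁,…,x₁₀) of the equation 3719x₁ + 20289x₂ + 29067x₃ + 60517x₄ + 64354x₅ + 65633x₆ + 76969x₇ + 102024x₈ + 106036x₉ + 119930x₁₀ = 13385099 is exactly 838908602000; in particular (3480, 1, 4, 4, 1, 0, 0, 0, 0, 0) is such a solution, so the equation is feasible. -/
/-!
The number of solutions of `∑ aᵢ xᵢ = n` is the coefficient of `X ^ n` in the power series
`F = ∏ 1 / (1 - X ^ aᵢ)` (`coeff_prod_geom`). It is computed by repeated halving of the exponent:
`F(X) = E(X) F(X²)` with `E = ∏ (1 + X ^ aᵢ)`, so for a polynomial `P` the coefficient of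
`X ^ (2m + r)`, `r < 2`, in `P F = (P E) F(X²)` is the coefficient of `X ^ m` in `P' F`, where `P'`
is the even part (`r = 0`) or the odd part (`r = 1`) of `P E` (`coeff_halve`). Ten halvings,
starting from `P = 1`, lead from the exponent `13385099` to `13071`. There only the weight `3719`
is small enough to matter, so the answer is the sum of the coefficients of the last `P` at
`13071 - 3719 j` for `j ≤ 3`.

To make these polynomial operations feasible for the kernel, a polynomial is stored as a binary
tree of depth `k`, whose two branches hold the even and the odd part, and whose `2 ^ k` leaves hold
polynomials evaluated at `B = 2 ^ w`, modulo `B ^ L` (`Rep`). Multiplication by `1 + X ^ a` is then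
a shift and an addition of large natural numbers, and taking the even or odd part is descending to
a branch. All these operations commute with evaluation, so nothing has to be known about carries on
the way. At the end the coefficients are read off as base-`B` digits; this is legitimate because
each of the `10 * 10` multiplications by some `1 + X ^ a` doubles the sum of all coefficients, while
taking a part does not increase it, and `2 ^ 100 < B` for `w = 101`.
-/

namespace Prob9

/-! ### The algorithm -/

/-- Binary trees with natural numbers at the leaves. A perfect tree of depth `k` stores a
polynomial: `node e o` stores `e(X²) + X o(X²)`, and `leaf n` a polynomial packed into `n`. -/
inductive PTree where
  | leaf (n : ℕ) : PTree
  | node (e o : PTree) : PTree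

namespace PTree

/-- The tree of depth `k` storing the polynomial `0`. -/
def zero : ℕ → PTree
  | 0 => leaf 0
  | k + 1 => node (zero k) (zero k)

/-- The tree of depth `k` storing the polynomial `1`. -/
def one : ℕ → PTree
  | 0 => leaf 1
  | k + 1 => node (one k) (zero k)

/-- Multiplication by `X ^ a`, for leaves packed in base `2 ^ w`. -/
def shift (w : ℕ) : PTree → ℕ → PTree
  | leaf n, a => leaf (n <<< (w * a))
  | node e o, a =>
    bif (a % 2).beq 0 then node (shift w e (a / 2)) (shift w o (a / 2))
    else node (shift w o (a / 2 + 1)) (shift w e (a / 2))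

/-- Addition of trees of equal depth, with the leaves truncated by the bit mask `M`. The value on
trees of different shapes is irrelevant. -/
def add (M : ℕ) : PTree → PTree → PTree
  | leaf m, leaf n => leaf (Nat.land (m + n) M)
  | node e o, node e' o' => node (add M e e') (add M o o')
  | s, _ => s

/-- Multiplication by `∏ (1 + X ^ a)`, for `a` in the given list. -/
def mulAll (w M : ℕ) : List ℕ → PTree → PTree
  | [], t => t
  | a :: l, t => mulAll w M l (add M t (shift w t a))

/-- `k` halving steps, starting from the exponent `n`: multiply by `∏ (1 + X ^ a)`, keep the part
whose parity is that of `n`, and replace `n` by `n / 2`. -/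
def run (w M : ℕ) (l : List ℕ) : ℕ → ℕ → PTree → PTree
  | 0, _, t => t
  | k + 1, n, t =>
    match mulAll w M l t with
    | leaf m => leaf m
    | node e o => run w M l k (n / 2) (bif (n % 2).beq 0 then e else o)

/-- The number at a leaf; the value on other trees is irrelevant. -/
def val : PTree → ℕ
  | leaf n => n
  | node _ _ => 0

end PTree

/-- The digit of `v` at position `j` in base `2 ^ w`. -/
def digit (w v j : ℕ) : ℕ := (v >>> (w * j)) % 2 ^ w

/-- The weights other than `3719`. -/
def bigWeights : List ℕ :=
  [20289, 29067, 60517, 64354, 65633, 76969, 102024, 106036, 119930]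

/-- The packed polynomial after ten halvings; `L = 13072` digits suffice since
`13385099 / 2 ^ 10 = 13071`. -/
def packed : ℕ :=
  (PTree.run 101 (2 ^ (101 * 13072) - 1) (3719 :: bigWeights) 10 13385099 (PTree.one 10)).val

/-- The computation, carried out by the kernel's arithmetic on large natural numbers. The positions
are `13071 - 3719 j` for `j ≤ 3`. -/
theorem digits_packed :
    digit 101 packed 13071 + (digit 101 packed 9352 +
      (digit 101 packed 5633 + digit 101 packed 1914)) = 838908602000 := by
  decide +kernel

/-! ### Generating functions -/

section Series

open PowerSeries

/-- A polynomial with natural coefficients as a power series over `ℤ`, the coefficient ring of all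
power series below because `PowerSeries.expand` requires a ring. -/
noncomputable def toSeries : Polynomial ℕ →+* ℤ⟦X⟧ :=
  Polynomial.coeToPowerSeries.ringHom.comp (Polynomial.mapRingHom (Nat.castRingHom ℤ))

theorem coeff_toSeries (p : Polynomial ℕ) (n : ℕ) : coeff n (toSeries p) = (p.coeff n : ℤ) := by
  simp [toSeries]

theorem toSeries_X : toSeries Polynomial.X = X := by
  simp [toSeries]

/-- The geometric series `1 / (1 - X ^ a)`. -/
noncomputable def geom (a : ℕ) : ℤ⟦X⟧ := PowerSeries.mk fun n => if a ∣ n then 1 else 0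

theorem geom_eq_one_add {a : ℕ} (ha : 0 < a) : geom a = 1 + X ^ a * geom a := by
  ext n
  simp only [geom, map_add, coeff_mk, coeff_one, coeff_X_pow_mul']
  rcases Nat.lt_or_ge n a with h | h
  · rcases Nat.eq_zero_or_pos n with rfl | hn
    · simp [ha.ne']
    · simp [Nat.not_le.2 h, hn.ne', Nat.not_dvd_of_pos_of_lt hn h]
  · have : n ≠ 0 := by omega
    simp [h, this, Nat.dvd_sub_iff_left h dvd_rfl]

theorem expand_geom (a : ℕ) : PowerSeries.expand 2 two_ne_zero (geom a) = geom (2 * a) := by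
  ext n
  rcases Nat.even_or_odd' n with ⟨m, rfl | rfl⟩
  · rw [coeff_expand_mul]
    simp [geom, Nat.mul_dvd_mul_iff_left]
  · rw [coeff_expand_of_not_dvd _ _ _ (by omega)]
    have : ¬ 2 * a ∣ 2 * m + 1 := fun h => by
      have := (Dvd.intro _ rfl : 2 ∣ 2 * a).trans h
      omega
    simp [geom, this]

/-- `1 / (1 - X ^ a) = (1 + X ^ a) / (1 - X ^ (2 a))`: split the multiples of `a` into even and odd
ones. -/
theorem geom_eq_mul_expand {a : ℕ} (ha : 0 < a) :
    geom a = (1 + X ^ a) * PowerSeries.expand 2 two_ne_zero (geom a) := by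
  rw [expand_geom]
  ext n
  simp only [geom, add_mul, one_mul, map_add, coeff_mk, coeff_X_pow_mul']
  by_cases h : a ∣ n
  · obtain ⟨m, rfl⟩ := h
    rcases Nat.even_or_odd' m with ⟨j, rfl | rfl⟩
    · have h1 : 2 * a ∣ a * (2 * j) := ⟨j, by ring⟩
      have h2 : ¬ (a ≤ a * (2 * j) ∧ 2 * a ∣ a * (2 * j) - a) := by
        rintro ⟨hle, hd⟩
        have h3 : 2 * a ∣ a := (Nat.dvd_sub_iff_right hle h1).1 hd
        have := Nat.le_of_dvd ha h3
        omega
      rw [not_and] at h2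
      simp only [dvd_mul_right, h1, if_true]
      split_ifs <;> simp_all
    · have e : a * (2 * j + 1) = 2 * a * j + a := by ring
      have h1 : ¬ 2 * a ∣ a * (2 * j + 1) := by
        rw [e]
        intro hd
        have h3 : 2 * a ∣ a := (Nat.dvd_add_right (Dvd.intro _ rfl)).1 hd
        have := Nat.le_of_dvd ha h3
        omega
      rw [if_pos (Dvd.intro _ rfl), if_neg h1, e]
      simp
  · have h1 : ¬ 2 * a ∣ n := fun hd => h ((Dvd.intro_left _ rfl).trans hd)
    have h2 : a ≤ n → ¬ 2 * a ∣ n - a := fun hle hd =>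
      h ((Nat.dvd_sub_iff_left hle dvd_rfl).1 ((Dvd.intro_left _ rfl).trans hd))
    simp only [h, h1, if_false]
    split_ifs <;> simp_all

/-- The generating function `∏ 1 / (1 - X ^ a)` of the weights in a list. -/
noncomputable def genFun (l : List ℕ) : ℤ⟦X⟧ := (l.map geom).prod

/-- The polynomial `∏ (1 + X ^ a)` of the weights in a list. -/
noncomputable def binPoly (l : List ℕ) : Polynomial ℕ :=
  (l.map fun a => 1 + Polynomial.X ^ a).prod

theorem genFun_eq_mul_expand (l : List ℕ) (hl : ∀ a ∈ l, 0 < a) :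
    genFun l = toSeries (binPoly l) * PowerSeries.expand 2 two_ne_zero (genFun l) := by
  induction l with
  | nil => simp [genFun, binPoly]
  | cons a l ih =>
    have ih := ih fun b hb => hl b (List.mem_cons_of_mem _ hb)
    have ha := geom_eq_mul_expand (hl a List.mem_cons_self)
    have e1 : genFun (a :: l) = geom a * genFun l := by simp [genFun]
    have e2 : toSeries (binPoly (a :: l)) = (1 + X ^ a) * toSeries (binPoly l) := by
      simp [binPoly, toSeries_X]
    rw [e1, e2, map_mul]
    conv_lhs => rw [ha, ih]
    ring

theorem toSeries_expand (p : Polynomial ℕ) :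
    toSeries (Polynomial.expand ℕ 2 p) =
      PowerSeries.expand 2 two_ne_zero (toSeries p) := by
  ext n
  rw [coeff_toSeries, Polynomial.coeff_expand two_pos]
  split_ifs with h
  · obtain ⟨m, rfl⟩ := h
    rw [coeff_expand_mul, coeff_toSeries, Nat.mul_div_cancel_left _ two_pos]
  · rw [coeff_expand_of_not_dvd _ _ _ h, Nat.cast_zero]

theorem coeff_expand_add_X_mul_expand (f g : ℤ⟦X⟧) (n : ℕ) :
    coeff n (PowerSeries.expand 2 two_ne_zero f + X * PowerSeries.expand 2 two_ne_zero g) =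
      coeff (n / 2) (bif (n % 2).beq 0 then f else g) := by
  rcases Nat.even_or_odd' n with ⟨m, rfl | rfl⟩
  · have h0 : coeff (2 * m) (X * PowerSeries.expand 2 two_ne_zero g) = 0 := by
      rcases m with _ | m
      · simp
      · rw [show 2 * (m + 1) = (2 * m + 1) + 1 by ring, coeff_succ_X_mul,
          coeff_expand_of_not_dvd _ _ _ (by omega)]
    rw [map_add, h0, coeff_expand_mul]
    simp
  · rw [map_add, coeff_succ_X_mul, coeff_expand_mul, coeff_expand_of_not_dvd _ _ _ (by omega)]
    have h1 : (2 * m + 1) / 2 = m := by omega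
    have h2 : (2 * m + 1) % 2 = 1 := by omega
    rw [h1, h2, zero_add]
    rfl

/-- One halving of the exponent: here `pe` and `po` are the even and the odd part of `p E`. -/
theorem coeff_halve {l : List ℕ} (hl : ∀ a ∈ l, 0 < a) {p pe po : Polynomial ℕ}
    (h : p * binPoly l = Polynomial.expand ℕ 2 pe + Polynomial.X * Polynomial.expand ℕ 2 po)
    (n : ℕ) :
    coeff n (toSeries p * genFun l) =
      coeff (n / 2) (toSeries (bif (n % 2).beq 0 then pe else po) * genFun l) := by
  conv_lhs => rw [genFun_eq_mul_expand l hl, ← mul_assoc, ← map_mul, h]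
  rw [toSeries.map_add, toSeries.map_mul, toSeries_X, toSeries_expand, toSeries_expand,
    add_mul, mul_assoc, ← map_mul, ← map_mul, coeff_expand_add_X_mul_expand]
  cases (n % 2).beq 0 <;> rfl

theorem coeff_mul_geom_of_lt {a n : ℕ} (h : n < a) (f : ℤ⟦X⟧) :
    coeff n (f * geom a) = coeff n f := by
  rw [geom_eq_one_add (by omega), mul_add, mul_one, map_add, mul_left_comm, coeff_X_pow_mul',
    if_neg (by omega), add_zero]

theorem coeff_mul_geom_of_le {a n : ℕ} (ha : 0 < a) (h : a ≤ n) (f : ℤ⟦X⟧) :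
    coeff n (f * geom a) = coeff n f + coeff (n - a) (f * geom a) := by
  conv_lhs => rw [geom_eq_one_add ha, mul_add, mul_one, map_add, mul_left_comm, coeff_X_pow_mul',
    if_pos h]

theorem coeff_mul_genFun_of_lt {n : ℕ} (l : List ℕ) (h : ∀ a ∈ l, n < a) (f : ℤ⟦X⟧) :
    coeff n (f * genFun l) = coeff n f := by
  induction l generalizing f with
  | nil => simp [genFun]
  | cons a l ih =>
    have e : f * genFun (a :: l) = (f * geom a) * genFun l := by simp [genFun, mul_assoc]
    rw [e, ih (fun b hb => h b (List.mem_cons_of_mem _ hb)),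
      coeff_mul_geom_of_lt (h a List.mem_cons_self)]

theorem coeff_prod_geom {m : ℕ} (a : Fin m → ℕ) (ha : ∀ i, 0 < a i) (n : ℕ) :
    coeff n (∏ i, geom (a i)) = Nat.card {x : Fin m → ℕ // ∑ i, a i * x i = n} := by
  classical
  rw [coeff_prod]
  simp only [geom, coeff_mk, Finset.prod_boole, Finset.mem_univ, true_imp_iff]
  rw [Finset.sum_boole, Nat.cast_inj, ← Fintype.card_coe, ← Nat.card_eq_fintype_card]
  -- A solution `x` corresponds to the decomposition of `n` into the parts `aᵢ xᵢ`.
  refine (Nat.card_congr (Equiv.ofBijective (fun x => ⟨Finsupp.equivFunOnFinite.symm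
    (fun i => a i * x.1 i), by simp [Finset.mem_finsuppAntidiag, x.2]⟩) ⟨?_, ?_⟩)).symm
  · intro x y hxy
    ext i
    have := DFunLike.congr_fun (congrArg Subtype.val hxy) i
    exact Nat.eq_of_mul_eq_mul_left (ha i) (by simpa using this)
  · rintro ⟨y, hy⟩
    simp only [Finset.mem_filter, Finset.mem_finsuppAntidiag] at hy
    refine ⟨⟨fun i => y i / a i, ?_⟩, ?_⟩
    · rw [← hy.1.1]
      exact Finset.sum_congr rfl fun i _ => Nat.mul_div_cancel' (hy.2 i)
    · ext i
      simpa using Nat.mul_div_cancel' (hy.2 i)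

end Series

/-! ### Correctness of the algorithm -/

section Correctness

open Polynomial

/-- `Rep w L k t p`: the tree `t` of depth `k` stores the polynomial `p`, where a leaf stores a
polynomial as its value at `2 ^ w`, modulo `(2 ^ w) ^ L`. -/
inductive Rep (w L : ℕ) : ℕ → PTree → ℕ[X] → Prop
  | leaf {n : ℕ} {p : ℕ[X]} (h : n ≡ p.eval (2 ^ w) [MOD (2 ^ w) ^ L]) : Rep w L 0 (.leaf n) p
  | node {k : ℕ} {e o : PTree} {pe po : ℕ[X]} (he : Rep w L k e pe) (ho : Rep w L k o po) :
      Rep w L (k + 1) (.node e o) (expand ℕ 2 pe + X * expand ℕ 2 po)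

variable {w L : ℕ}

theorem rep_zero (k : ℕ) : Rep w L k (.zero k) 0 := by
  induction k with
  | zero => exact .leaf (by simp [Nat.ModEq])
  | succ k ih => simpa [PTree.zero] using Rep.node ih ih

theorem rep_one (k : ℕ) : Rep w L k (.one k) 1 := by
  induction k with
  | zero => exact .leaf (by simp [Nat.ModEq])
  | succ k ih => simpa [PTree.one] using Rep.node ih (rep_zero k)

theorem Rep.shift {k : ℕ} {t : PTree} {p : ℕ[X]} (h : Rep w L k t p) (a : ℕ) :
    Rep w L k (t.shift w a) (X ^ a * p) := by
  induction h generalizing a with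
  | leaf h =>
    refine .leaf ?_
    rw [Nat.shiftLeft_eq, pow_mul, eval_mul, eval_pow, eval_X, mul_comm]
    exact h.mul_left _
  | @node k e o pe po _ _ ihe iho =>
    rcases Nat.even_or_odd' a with ⟨b, rfl | rfl⟩
    · have h2 : 2 * b / 2 = b := by omega
      have e1 : X ^ (2 * b) * (expand ℕ 2 pe + X * expand ℕ 2 po) =
          expand ℕ 2 (X ^ b * pe) + X * expand ℕ 2 (X ^ b * po) := by
        simp only [map_mul, map_pow, expand_X]
        ring
      simpa [PTree.shift, h2, e1] using Rep.node (ihe b) (iho b)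
    · have h1 : (2 * b + 1) % 2 = 1 := by omega
      have h2 : (2 * b + 1) / 2 = b := by omega
      have e1 : X ^ (2 * b + 1) * (expand ℕ 2 pe + X * expand ℕ 2 po) =
          expand ℕ 2 (X ^ (b + 1) * po) + X * expand ℕ 2 (X ^ b * pe) := by
        simp only [map_mul, map_pow, expand_X]
        ring
      rw [e1]
      rw [PTree.shift, h1, h2]
      exact Rep.node (iho (b + 1)) (ihe b)

theorem Rep.add {k : ℕ} {s t : PTree} {p q : ℕ[X]} (hs : Rep w L k s p) (ht : Rep w L k t q) :
    Rep w L k (s.add (2 ^ (w * L) - 1) t) (p + q) := by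
  induction hs generalizing t q with
  | leaf h =>
    cases ht with
    | leaf h' =>
      refine .leaf ?_
      have e (x : ℕ) : Nat.land x (2 ^ (w * L) - 1) = x % (2 ^ w) ^ L := by
        rw [← pow_mul]
        exact Nat.and_two_pow_sub_one_eq_mod x (w * L)
      rw [e, eval_add]
      exact (Nat.mod_modEq _ _).trans (h.add h')
  | node _ _ ihe iho =>
    cases ht with
    | node he' ho' =>
      have e := Rep.node (ihe he') (iho ho')
      rw [map_add, map_add, mul_add, add_add_add_comm] at e
      exact e

theorem Rep.mulAll {k : ℕ} (l : List ℕ) {t : PTree} {p : ℕ[X]} (h : Rep w L k t p) :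
    Rep w L k (t.mulAll w (2 ^ (w * L) - 1) l) (p * binPoly l) := by
  induction l generalizing t p with
  | nil => simpa [PTree.mulAll, binPoly] using h
  | cons a l ih =>
    have e : p * binPoly (a :: l) = (p + X ^ a * p) * binPoly l := by
      simp only [binPoly, List.map_cons, List.prod_cons]
      ring
    rw [e]
    exact ih (h.add (h.shift a))

theorem eval_one_binPoly (l : List ℕ) : (binPoly l).eval 1 = 2 ^ l.length := by
  induction l with
  | nil => simp [binPoly]
  | cons a l ih =>
    have e : binPoly (a :: l) = (1 + X ^ a) * binPoly l := by simp [binPoly]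
    rw [e, eval_mul, ih]
    simp
    ring

/-- Starting from a tree storing `p`, the algorithm ends in a leaf storing a polynomial `q` with
`[X ^ n] (p F) = [X ^ (n / 2 ^ k)] (q F)`. The bound on `q.eval 1`, the sum of the coefficients, is
what allows reading off the coefficients of `q` as digits. -/
theorem run_spec {l : List ℕ} (hl : ∀ a ∈ l, 0 < a) {k : ℕ} {t : PTree} {p : ℕ[X]}
    (h : Rep w L k t p) (n : ℕ) :
    ∃ q : ℕ[X], Rep w L 0 (t.run w (2 ^ (w * L) - 1) l k n) q ∧
      q.eval 1 ≤ p.eval 1 * 2 ^ (l.length * k) ∧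
      PowerSeries.coeff n (toSeries p * genFun l) =
        PowerSeries.coeff (n / 2 ^ k) (toSeries q * genFun l) := by
  induction k generalizing t p n with
  | zero => exact ⟨p, by simpa [PTree.run] using h, by simp, by simp⟩
  | succ k ih =>
    have hm := h.mulAll l
    generalize ht : t.mulAll w (2 ^ (w * L) - 1) l = t' at hm
    generalize hp : p * binPoly l = p' at hm
    cases hm with
    | @node _ e o pe po he ho =>
      have hr : Rep w L k (bif (n % 2).beq 0 then e else o)
          (bif (n % 2).beq 0 then pe else po) := by
        cases (n % 2).beq 0 <;> assumption
      obtain ⟨q, hq, hle, hc⟩ := ih hr (n / 2)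
      refine ⟨q, by simpa [PTree.run, ht] using hq, hle.trans ?_, ?_⟩
      · have hsum : p.eval 1 * 2 ^ l.length = pe.eval 1 + po.eval 1 := by
          rw [← eval_one_binPoly, ← eval_mul, hp]
          simp [expand_eval]
        have : (bif (n % 2).beq 0 then pe else po).eval 1 ≤ p.eval 1 * 2 ^ l.length := by
          rw [hsum]
          cases (n % 2).beq 0 <;> simp
        calc _ ≤ p.eval 1 * 2 ^ l.length * 2 ^ (l.length * k) := Nat.mul_le_mul_right _ this
          _ = _ := by ring
      · rw [coeff_halve hl hp, hc, Nat.div_div_eq_div_mul, ← pow_succ']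

theorem coeff_le_eval_one (p : ℕ[X]) (j : ℕ) : p.coeff j ≤ p.eval 1 := by
  rw [eval_eq_sum, Polynomial.sum]
  by_cases h : j ∈ p.support
  · simpa using Finset.single_le_sum (f := fun i => p.coeff i * 1 ^ i) (by simp) h
  · simp [notMem_support_iff.1 h]

/-- If all coefficients are less than `B`, they are the base-`B` digits of the value at `B`. -/
theorem eval_div_pow_mod {B : ℕ} (p : ℕ[X]) (hp : ∀ j, p.coeff j < B) (j : ℕ) :
    p.eval B / B ^ j % B = p.coeff j := by
  have hB : 0 < B := (Nat.zero_le _).trans_lt (hp 0)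
  have e : p.eval B = p.coeff 0 + B * p.divX.eval B := by
    conv_lhs => rw [← divX_mul_X_add p]
    simp
    ring
  induction j generalizing p with
  | zero => rw [e, pow_zero, Nat.div_one, Nat.add_mul_mod_self_left, Nat.mod_eq_of_lt (hp 0)]
  | succ j ih =>
    rw [pow_succ', ← Nat.div_div_eq_div_mul, e, Nat.add_mul_div_left _ _ hB,
      Nat.div_eq_of_lt (hp 0), zero_add, ih p.divX (fun i => by simpa using hp (i + 1)), coeff_divX]
    conv_lhs => rw [← divX_mul_X_add p.divX]
    simp
    ring

theorem digit_eq_coeff {v j : ℕ} {p : ℕ[X]} (h : v ≡ p.eval (2 ^ w) [MOD (2 ^ w) ^ L])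
    (hp : p.eval 1 < 2 ^ w) (hj : j < L) : digit w v j = p.coeff j := by
  rw [← eval_div_pow_mod p (fun i => (coeff_le_eval_one p i).trans_lt hp) j, digit,
    Nat.shiftRight_eq_div_pow, pow_mul]
  have hd : (2 ^ w) ^ j * 2 ^ w ∣ (2 ^ w) ^ L := by
    rw [← pow_succ]
    exact pow_dvd_pow _ hj
  have h' := h.of_dvd hd
  rw [← Nat.mod_mul_right_div_self, ← Nat.mod_mul_right_div_self, h']

end Correctness

theorem coeff_genFun :
    PowerSeries.coeff 13385099 (genFun (3719 :: bigWeights)) = 838908602000 := by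
  have hl : ∀ a ∈ 3719 :: bigWeights, 0 < a := by simp [bigWeights]
  obtain ⟨q, hq, hle, hc⟩ := run_spec (w := 101) (L := 13072) hl (rep_one 10) 13385099
  have hv : packed ≡ q.eval (2 ^ 101) [MOD (2 ^ 101) ^ 13072] := by
    unfold packed
    generalize PTree.run 101 (2 ^ (101 * 13072) - 1) (3719 :: bigWeights) 10 13385099
      (PTree.one 10) = t at hq
    cases hq with
    | leaf h => exact h
  have hq1 : q.eval 1 < 2 ^ 101 := by
    refine hle.trans_lt ?_
    simp [bigWeights]
  have hn : 13385099 / 2 ^ 10 = 13071 := by norm_num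
  have hG : (toSeries q * genFun (3719 :: bigWeights)) =
      toSeries q * geom 3719 * genFun bigWeights := by
    simp [genFun, mul_assoc]
  rw [map_one, one_mul, hn, hG,
    coeff_mul_genFun_of_lt _ (by simp [bigWeights])] at hc
  rw [hc, coeff_mul_geom_of_le (by norm_num) (by norm_num),
    coeff_mul_geom_of_le (by norm_num) (by norm_num),
    coeff_mul_geom_of_le (by norm_num) (by norm_num), coeff_mul_geom_of_lt (by norm_num)]
  simp only [coeff_toSeries, Nat.reduceSub]
  have hd := digits_packed
  rw [digit_eq_coeff hv hq1 (by norm_num), digit_eq_coeff hv hq1 (by norm_num),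
    digit_eq_coeff hv hq1 (by norm_num), digit_eq_coeff hv hq1 (by norm_num)] at hd
  exact_mod_cast hd

end Prob9

theorem prob9_count :
    Nat.card {x : Fin 10 → ℕ //
        3719 * x 0 + 20289 * x 1 + 29067 * x 2 + 60517 * x 3 + 64354 * x 4 +
          65633 * x 5 + 76969 * x 6 + 102024 * x 7 + 106036 * x 8 + 119930 * x 9 =
          13385099} = 838908602000 ∧
    3719 * 3480 + 20289 * 1 + 29067 * 4 + 60517 * 4 + 64354 * 1 +
        65633 * 0 + 76969 * 0 + 102024 * 0 + 106036 * 0 + 119930 * 0 = 13385099 := by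
  refine ⟨?_, by norm_num⟩
  have h := Prob9.coeff_prod_geom
    ![3719, 20289, 29067, 60517, 64354, 65633, 76969, 102024, 106036, 119930]
    (by intro i; fin_cases i <;> simp) 13385099
  have hF : ∏ i, Prob9.geom
      (![3719, 20289, 29067, 60517, 64354, 65633, 76969, 102024, 106036, 119930] i) =
        Prob9.genFun (3719 :: Prob9.bigWeights) := by
    simp [Fin.prod_univ_succ, Prob9.genFun, Prob9.bigWeights]
  rw [hF, Prob9.coeff_genFun] at h
  rw [← Nat.cast_ofNat, Nat.cast_inj] at h
  rw [h]
  refine Nat.card_congr (Equiv.subtypeEquivRight fun x => ?_)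
  simp [Fin.sum_univ_succ, add_assoc]
end

section
/- Consider the set S of vectors x ∈ ℤ⁸ with all coordinates nonnegative satisfying 25067x₁ + 49300x₂ + 49717x₃ + 62124x₄ + 87608x₅ + 88025x₆ + 113673x₇ + 119169x₈ = 33367336, and the linear objective c·x = 213x₁ − 1928x₂ − 11111x₃ − 2345x₄ + 9123x₅ − 12834x₆ − 123x₇ + 122331x₈. Then the maximum of c·x over S equals 9257735, and it is attained at exactly one point of S, namely x = (966, 5, 0, 0, 1, 0, 0, 74). -/
/-!
The coefficients decompose over two short vectors: `a = 11409 p + 1832 q` with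
`p = (3, 4, 5, 4, 8, 9, 9, 9)` and `q = (-5, 2, -4, 9, -2, -8, 6, 9)`. Hence `a · x = b` fixes `p · x`
modulo 1832, and since the ratios `q_i / p_i` lie in `[-5/3, 9/4]`, nonnegativity confines `p · x` to
an interval containing a single number of that residue class. So `p · x = 3592` and
`q · x = -4156` (`aggregates_eq`).

The program with these two equations has the LP-optimal basis `{x₁, x₈}`. With the dual multipliers
`51131 / 6` and `30423 / 6`, the objective satisfies `6 (c · x) = 57224564 - w · y`, where
`y = (x₂, …, x₇)` and `w = (276938, 200629, 492401, 293464, 293799, 643455)` are the (scaled) reduced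
costs. Eliminating `x₁` from the two equations leaves the congruence
`26 y₁ + 13 y₂ + 47 y₃ + 34 y₄ + 21 y₅ + 63 y₆ ≡ 20 (mod 72)`, integrality of `x₈`. What remains is
Gomory's group problem over `ℤ / 72`: its minimum reduced cost is
`1678154 = 57224564 - 6 * 9257735`, attained only at `y = (5, 0, 0, 1, 0, 0)`
(`group_problem`, a finite check, as the positive weights bound every variable).
-/

set_option synthInstance.maxSize 5000 in
/-- The group problem over `ℤ / 72` on the box that the bound `w · y ≤ 1678154` implies. -/
lemma group_problem_box :
    ∀ (f : Fin 3) (c : Fin 4) (e d : Fin 6) (a : Fin 7) (b : Fin 9),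
      (26 * a.val + 13 * b.val + 47 * c.val + 34 * d.val + 21 * e.val + 63 * f.val) % 72 = 20 →
      276938 * a.val + 200629 * b.val + 492401 * c.val + 293464 * d.val +
        293799 * e.val + 643455 * f.val ≤ 1678154 →
      a.val = 5 ∧ b.val = 0 ∧ c.val = 0 ∧ d.val = 1 ∧ e.val = 0 ∧ f.val = 0 := by
  decide +kernel

/-- A solution of the group problem whose reduced cost is at most `1678154` is `(5, 0, 0, 1, 0, 0)`. -/
lemma group_problem (a b c d e f : ℕ)
    (hmod : (26 * a + 13 * b + 47 * c + 34 * d + 21 * e + 63 * f) % 72 = 20)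
    (hw : 276938 * a + 200629 * b + 492401 * c + 293464 * d + 293799 * e + 643455 * f
      ≤ 1678154) :
    a = 5 ∧ b = 0 ∧ c = 0 ∧ d = 1 ∧ e = 0 ∧ f = 0 :=
  group_problem_box ⟨f, by omega⟩ ⟨c, by omega⟩ ⟨e, by omega⟩ ⟨d, by omega⟩ ⟨a, by omega⟩
    ⟨b, by omega⟩ hmod hw

/-- The two aggregated equations `p · x = 3592` and `q · x = -4156` implied by the knapsack
equation. -/
lemma aggregates_eq (x₁ x₂ x₃ x₄ x₅ x₆ x₇ x₈ : ℕ)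
    (h : (25067 : ℤ) * x₁ + 49300 * x₂ + 49717 * x₃ + 62124 * x₄ + 87608 * x₅ + 88025 * x₆ +
      113673 * x₇ + 119169 * x₈ = 33367336) :
    (3 * x₁ + 4 * x₂ + 5 * x₃ + 4 * x₄ + 8 * x₅ + 9 * x₆ + 9 * x₇ + 9 * x₈ : ℤ) = 3592 ∧
    (-5 * x₁ + 2 * x₂ - 4 * x₃ + 9 * x₄ - 2 * x₅ - 8 * x₆ + 6 * x₇ + 9 * x₈ : ℤ) = -4156 := by
  obtain ⟨P, hP⟩ : ∃ P : ℤ,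
      P = 3 * x₁ + 4 * x₂ + 5 * x₃ + 4 * x₄ + 8 * x₅ + 9 * x₆ + 9 * x₇ + 9 * x₈ := ⟨_, rfl⟩
  obtain ⟨Q, hQ⟩ : ∃ Q : ℤ,
      Q = -5 * x₁ + 2 * x₂ - 4 * x₃ + 9 * x₄ - 2 * x₅ - 8 * x₆ + 6 * x₇ + 9 * x₈ := ⟨_, rfl⟩
  have hPQ : 11409 * P + 1832 * Q = 33367336 := by rw [hP, hQ]; linarith
  -- The extreme ratios `q_i / p_i` are `-5/3`, at `x₁`, and `9/4`, at `x₄`.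
  have hlow : 0 ≤ 5 * P + 3 * Q := by rw [hP, hQ]; linarith
  have hupp : 0 ≤ 9 * P - 4 * Q := by rw [hP, hQ]; linarith
  rw [← hP, ← hQ]
  clear hP hQ h
  omega

/-- A feasible point whose objective value is at least `9257735` is the claimed optimum. -/
lemma eq_of_le_objective (x₁ x₂ x₃ x₄ x₅ x₆ x₇ x₈ : ℕ)
    (h : (25067 : ℤ) * x₁ + 49300 * x₂ + 49717 * x₃ + 62124 * x₄ + 87608 * x₅ + 88025 * x₆ +
      113673 * x₇ + 119169 * x₈ = 33367336)
    (hobj : (9257735 : ℤ) ≤ 213 * x₁ - 1928 * x₂ - 11111 * x₃ - 2345 * x₄ + 9123 * x₅ -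
      12834 * x₆ - 123 * x₇ + 122331 * x₈) :
    x₁ = 966 ∧ x₂ = 5 ∧ x₃ = 0 ∧ x₄ = 0 ∧ x₅ = 1 ∧ x₆ = 0 ∧ x₇ = 0 ∧ x₈ = 74 := by
  obtain ⟨hP, hQ⟩ := aggregates_eq x₁ x₂ x₃ x₄ x₅ x₆ x₇ x₈ h
  -- Five times the first equation plus three times the second eliminates `x₁`.
  have hx₈ : 26 * x₂ + 13 * x₃ + 47 * x₄ + 34 * x₅ + 21 * x₆ + 63 * x₇ + 72 * x₈ = 5492 := by
    zify
    linarith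
  have hw : 276938 * x₂ + 200629 * x₃ + 492401 * x₄ + 293464 * x₅ + 293799 * x₆ + 643455 * x₇
      ≤ 1678154 := by
    zify
    linarith
  obtain ⟨rfl, rfl, rfl, rfl, rfl, rfl⟩ := group_problem x₂ x₃ x₄ x₅ x₆ x₇
    (by clear h hobj hw hP hQ; omega) hw
  clear h hobj hw
  omega

theorem prob1_integer_program :
    (∀ x : Fin 8 → ℤ, (∀ i, 0 ≤ x i) →
        25067 * x 0 + 49300 * x 1 + 49717 * x 2 + 62124 * x 3 + 87608 * x 4 +
            88025 * x 5 + 113673 * x 6 + 119169 * x 7 = 33367336 →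
        213 * x 0 - 1928 * x 1 - 11111 * x 2 - 2345 * x 3 + 9123 * x 4 -
            12834 * x 5 - 123 * x 6 + 122331 * x 7 ≤ 9257735) ∧
    (∀ x : Fin 8 → ℤ,
        ((∀ i, 0 ≤ x i) ∧
          25067 * x 0 + 49300 * x 1 + 49717 * x 2 + 62124 * x 3 + 87608 * x 4 +
              88025 * x 5 + 113673 * x 6 + 119169 * x 7 = 33367336 ∧
          213 * x 0 - 1928 * x 1 - 11111 * x 2 - 2345 * x 3 + 9123 * x 4 -
              12834 * x 5 - 123 * x 6 + 122331 * x 7 = 9257735) ↔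
          x = ![966, 5, 0, 0, 1, 0, 0, 74]) := by
  -- Passing to natural-number coordinates, an objective value of at least `9257735` forces the point.
  have key : ∀ x : Fin 8 → ℤ, (∀ i, 0 ≤ x i) →
      25067 * x 0 + 49300 * x 1 + 49717 * x 2 + 62124 * x 3 + 87608 * x 4 +
        88025 * x 5 + 113673 * x 6 + 119169 * x 7 = 33367336 →
      9257735 ≤ 213 * x 0 - 1928 * x 1 - 11111 * x 2 - 2345 * x 3 + 9123 * x 4 -
        12834 * x 5 - 123 * x 6 + 122331 * x 7 →
      x = ![966, 5, 0, 0, 1, 0, 0, 74] := by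
    intro x hx h hobj
    lift x to Fin 8 → ℕ using hx
    obtain ⟨h0, h1, h2, h3, h4, h5, h6, h7⟩ :=
      eq_of_le_objective (x 0) (x 1) (x 2) (x 3) (x 4) (x 5) (x 6) (x 7)
        h hobj
    funext i
    fin_cases i <;> simp [h0, h1, h2, h3, h4, h5, h6, h7]
  refine ⟨fun x hx h => ?_, fun x => ⟨fun ⟨hx, h, hobj⟩ => key x hx h hobj.ge, ?_⟩⟩
  · by_contra! hlt
    have hopt := key x hx h hlt.le
    subst hopt
    simp at hlt
  · rintro rfl
    refine ⟨fun i => ?_, by simp, by simp⟩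
    fin_cases i <;> simp
end
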